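/- Let Σ be an alphabet with at least two distinct elements, let I be a finite index set, and for each i ∈ I let u_i and v_i be words over Σ. Then there exists a word w over Σ such that for every i ∈ I and every n ∈ ℕ, w is not a prefix of u_i ++ v_i^n. -/

import Mathlib

/-- The `n`-fold concatenation of a word with itself. -/
def wordPow {α : Type*} (u : List α) (n : ℕ) : List α :=
  (List.replicate n u).flatten

theorem wordPow_prefix_wordPow {α : Type*} (v : List α) {m n : ℕ} (h : m ≤ n) :
    wordPow v m <+: wordPow v n :=
  List.IsPrefix.flatten (List.prefix_replicate_iff.2 ⟨by simpa using h, by simp⟩)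

theorem isChain_prefix_range_append_wordPow {α : Type*} (u v : List α) :
    IsChain (· <+: ·) (Set.range fun n ↦ u ++ wordPow v n) := by
  rintro _ ⟨m, rfl⟩ _ ⟨n, rfl⟩ -
  simp only [List.prefix_append_right_inj]
  exact (le_total m n).imp (wordPow_prefix_wordPow v) (wordPow_prefix_wordPow v)

theorem eq_of_append_singleton_prefix {α : Type*} {p x : List α} {a b : α}
    (ha : p ++ [a] <+: x) (hb : p ++ [b] <+: x) : a = b := by
  have hab : p ++ [a] <+: p ++ [b] := List.prefix_of_prefix_length_le ha hb (by simp)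
  simpa using hab

theorem exists_append_singleton_not_prefix_of_isChain {α : Type*} [Nontrivial α]
    {S : Set (List α)} (hS : IsChain (· <+: ·) S) (p : List α) :
    ∃ c : α, ∀ x ∈ S, ¬ p ++ [c] <+: x := by
  obtain ⟨a, b, hab⟩ := exists_pair_ne α
  by_contra! h
  obtain ⟨x, hx, hax⟩ := h a
  obtain ⟨y, hy, hby⟩ := h b
  rcases hS.total hx hy with hxy | hyx
  · exact hab (eq_of_append_singleton_prefix (hax.trans hxy) hby)
  · exact hab (eq_of_append_singleton_prefix hax (hby.trans hyx))

/-- Treat the chains one at a time: a letter appended to escape a new chain cannot bring the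
word back among the prefixes of an earlier one. -/
theorem exists_not_prefix_of_finite_of_isChain {α : Type*} [Nontrivial α]
    {C : Set (Set (List α))} (hfin : C.Finite) (hC : ∀ S ∈ C, IsChain (· <+: ·) S) :
    ∃ w : List α, ∀ S ∈ C, ∀ x ∈ S, ¬ w <+: x := by
  induction C, hfin using Set.Finite.induction_on with
  | empty => simp
  | @insert S C _ _ ih =>
    rw [Set.forall_mem_insert] at hC
    obtain ⟨w, hw⟩ := ih hC.2
    obtain ⟨c, hc⟩ := exists_append_singleton_not_prefix_of_isChain hC.1 w
    refine ⟨w ++ [c], Set.forall_mem_insert.2 ⟨hc, fun T hT x hx hwc ↦ ?_⟩⟩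
    exact hw T hT x hx ((List.prefix_append w [c]).trans hwc)

/-- Over an alphabet with at least two letters, given finitely many pairs of
words `(u_i, v_i)`, there is a word `w` that is not a prefix of any
`u_i ++ v_i^n`. -/
theorem stmt_5 {α : Type*} (hα : ∃ a b : α, a ≠ b)
    {ι : Type*} [Fintype ι] (u v : ι → List α) :
    ∃ w : List α, ∀ (i : ι) (n : ℕ), ¬ w <+: (u i ++ wordPow (v i) n) := by
  have : Nontrivial α := ⟨hα⟩
  have hchain : ∀ S ∈ Set.range fun i ↦ Set.range fun n ↦ u i ++ wordPow (v i) n,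
      IsChain (· <+: ·) S :=
    Set.forall_mem_range.2 fun i ↦ isChain_prefix_range_append_wordPow (u i) (v i)
  obtain ⟨w, hw⟩ := exists_not_prefix_of_finite_of_isChain (Set.finite_range _) hchain
  exact ⟨w, fun i n ↦ hw _ ⟨i, rfl⟩ _ ⟨n, rfl⟩⟩
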